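/- Let H be a complex Hilbert space, ε > 0, and x, f ∈ H nonzero. Then ⟨x, f⟩ = 0 if and only if σ_ε(x ⊗ f) equals the open disc centered at 0 with radius √(ε² + ‖x‖‖f‖ε). -/

import Mathlib

open scoped InnerProductSpace

/-- The rank-one operator `x ⊗ f : z ↦ ⟨z, f⟩ x`. -/
noncomputable def rankOne {H : Type*} [NormedAddCommGroup H] [InnerProductSpace ℂ H]
    (x f : H) : H →L[ℂ] H :=
  (innerSL ℂ f).smulRight x

/-- The ε-pseudo spectrum `σ_ε(A) = {z : ‖(zI - A)⁻¹‖ > ε⁻¹}`, where points `z`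
with `zI - A` not invertible are included. -/
noncomputable def pseudoSpectrum {H : Type*} [NormedAddCommGroup H]
    [InnerProductSpace ℂ H] [CompleteSpace H] (ε : ℝ) (A : H →L[ℂ] H) : Set ℂ :=
  {z | ¬ IsUnit (z • (1 : H →L[ℂ] H) - A) ∨
    ε⁻¹ < ‖Ring.inverse (z • (1 : H →L[ℂ] H) - A)‖}

/-!
Let `τ = ⟪f, x⟫` and let `z` be a nonzero point with `τ = k z` for some `0 ≤ k ≤ 1`. Put
`p = ‖f‖ x` and `q = ‖x‖ f`. The conjugate linear map exchanging `p` and `q` is isometric, and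
`z - x ⊗ f` maps `conj z • p + s • q` to `s` times its image under that map as soon as
`s (s + ‖x‖ ‖f‖) = (1 - k) |z|²`. Hence `z ∈ σ_ε(x ⊗ f)` whenever
`(1 - k) |z|² < ε (ε + ‖x‖ ‖f‖)`. If `τ ≠ 0` lies in the closed disc of radius
`√(ε² + ‖x‖ ‖f‖ ε)`, this holds for some `z` on its boundary. If `τ = 0`, it holds on the whole open
punctured disc, and no point outside belongs to `σ_ε(x ⊗ f)` because `x ⊗ f` squares to zero:
splitting `v` along `ker A` and its complement gives `ε ‖v‖ ≤ ‖z v - A v‖` whenever `A² = 0` and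
`ε² + ‖A‖ ε ≤ |z|²`.
-/

theorem lt_norm_ringInverse_iff {𝕜 E : Type*} [NontriviallyNormedField 𝕜]
    [NormedAddCommGroup E] [NormedSpace 𝕜 E] {T : E →L[𝕜] E} (hT : IsUnit T) {r : ℝ} (hr : 0 ≤ r) :
    r < ‖Ring.inverse T‖ ↔ ∃ v, r * ‖T v‖ < ‖v‖ := by
  obtain ⟨u, rfl⟩ := hT
  have hu (v : E) : (↑u⁻¹ : E →L[𝕜] E) ((u : E →L[𝕜] E) v) = v :=
    DFunLike.congr_fun u.inv_mul v
  have hsurj : Function.Surjective (u : E →L[𝕜] E) :=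
    (ContinuousLinearEquiv.unitsEquiv 𝕜 E u).surjective
  rw [← not_iff_not]
  push Not
  rw [Ring.inverse_unit, ContinuousLinearMap.opNorm_le_iff hr, hsurj.forall]
  simp only [hu]

theorem exists_nonneg_mul_add_eq (a : ℝ) {d : ℝ} (hd : 0 ≤ d) : ∃ s, 0 ≤ s ∧ s * (s + a) = d := by
  have discr_nonneg : 0 ≤ a ^ 2 + 4 * d := by positivity
  refine ⟨(√(a ^ 2 + 4 * d) - a) / 2, ?_, ?_⟩
  · linarith [Real.le_sqrt_of_sq_le (show a ^ 2 ≤ a ^ 2 + 4 * d by linarith)]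
  · linarith [Real.sq_sqrt discr_nonneg]

theorem sq_mul_sq_add_sq_le {ε r c g : ℝ} (hεg : 0 ≤ ε * g) (hεr : ε ^ 2 ≤ r ^ 2)
    (h : ε * g ≤ (r ^ 2 - ε ^ 2) * c) (b : ℝ) :
    ε ^ 2 * (b ^ 2 + c ^ 2) ≤ (r * b - g) ^ 2 + r ^ 2 * c ^ 2 := by
  set m := r ^ 2 - ε ^ 2 with hm
  have : 0 ≤ m := sub_nonneg.mpr hεr
  -- The claim is that a quadratic polynomial in `b` is nonnegative; this bounds its discriminant.
  have cross_sq : (r * g) ^ 2 ≤ m * (g ^ 2 + m * c ^ 2) :=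
    calc (r * g) ^ 2 = m * g ^ 2 + (ε * g) ^ 2 := by rw [hm]; ring
      _ ≤ m * g ^ 2 + (m * c) ^ 2 := by gcongr
      _ = m * (g ^ 2 + m * c ^ 2) := by ring
  have cross : 2 * (r * g) * b ≤ m * b ^ 2 + (g ^ 2 + m * c ^ 2) := by
    refine le_of_abs_le (abs_le_of_sq_le_sq ?_ (by positivity))
    calc (2 * (r * g) * b) ^ 2 = 4 * (r * g) ^ 2 * b ^ 2 := by ring
      _ ≤ 4 * (m * (g ^ 2 + m * c ^ 2)) * b ^ 2 := by gcongr
      _ = 4 * (m * b ^ 2) * (g ^ 2 + m * c ^ 2) := by ring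
      _ ≤ _ := four_mul_le_sq_add _ _
  linarith

section InnerProductSpace

variable {𝕜 E : Type*} [RCLike 𝕜] [NormedAddCommGroup E] [InnerProductSpace 𝕜 E]

open scoped ComplexConjugate

theorem norm_smul_add_smul_eq_of_norm_eq {p q : E} (h : ‖p‖ = ‖q‖) (b c : 𝕜) :
    ‖b • p + c • q‖ = ‖conj c • p + conj b • q‖ := by
  rw [← sq_eq_sq₀ (norm_nonneg _) (norm_nonneg _)]
  simp only [norm_add_sq (𝕜 := 𝕜), norm_smul, RCLike.norm_conj, inner_smul_left,
    inner_smul_right, RCLike.conj_conj, h]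
  rw [mul_left_comm c]
  ring

theorem norm_add_sq_of_mem_of_mem_orthogonal {K : Submodule 𝕜 E} {u w : E} (hu : u ∈ K)
    (hw : w ∈ Kᗮ) : ‖u + w‖ ^ 2 = ‖u‖ ^ 2 + ‖w‖ ^ 2 := by
  simpa only [sq] using norm_add_sq_eq_norm_sq_add_norm_sq_of_inner_eq_zero u w (hw u hu)

theorem mul_norm_le_norm_smul_sub_of_mul_self_eq_zero [CompleteSpace E] {A : E →L[𝕜] E}
    (hA : A * A = 0) {ε : ℝ} (hε : 0 ≤ ε) {z : 𝕜} (hz : ε ^ 2 + ‖A‖ * ε ≤ ‖z‖ ^ 2) (v : E) :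
    ε * ‖v‖ ≤ ‖z • v - A v‖ := by
  obtain ⟨u, hu, w, hw, rfl⟩ := A.ker.exists_add_mem_mem_orthogonal v
  have hAu : A u = 0 := hu
  have hAw : A w ∈ A.ker := DFunLike.congr_fun hA w
  have split : z • (u + w) - A (u + w) = (z • u - A w) + z • w := by
    rw [map_add, hAu]
    module
  rw [← sq_le_sq₀ (by positivity) (norm_nonneg _), mul_pow, split,
    norm_add_sq_of_mem_of_mem_orthogonal hu hw, norm_add_sq_of_mem_of_mem_orthogonal
      (A.ker.sub_mem (A.ker.smul_mem z hu) hAw) (Submodule.smul_mem _ z hw)]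
  have ker_part : (‖z‖ * ‖u‖ - ‖A w‖) ^ 2 ≤ ‖z • u - A w‖ ^ 2 := by
    rw [← norm_smul, sq_le_sq, abs_norm]
    exact abs_norm_sub_norm_le _ _
  have hεz : ε ^ 2 ≤ ‖z‖ ^ 2 := (le_add_of_nonneg_right (by positivity)).trans hz
  have hAw_le : ε * ‖A w‖ ≤ (‖z‖ ^ 2 - ε ^ 2) * ‖w‖ :=
    calc ε * ‖A w‖ ≤ ε * (‖A‖ * ‖w‖) := by gcongr; exact A.le_opNorm w
      _ = ‖A‖ * ε * ‖w‖ := by ring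
      _ ≤ (‖z‖ ^ 2 - ε ^ 2) * ‖w‖ := by gcongr; linarith
  calc ε ^ 2 * (‖u‖ ^ 2 + ‖w‖ ^ 2) ≤ (‖z‖ * ‖u‖ - ‖A w‖) ^ 2 + ‖z‖ ^ 2 * ‖w‖ ^ 2 :=
        sq_mul_sq_add_sq_le (by positivity) hεz hAw_le ‖u‖
    _ ≤ ‖z • u - A w‖ ^ 2 + ‖z • w‖ ^ 2 := by rw [norm_smul z w, mul_pow]; gcongr

end InnerProductSpace

section Hilbert

variable {H : Type*} [NormedAddCommGroup H] [InnerProductSpace ℂ H]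

open scoped ComplexConjugate

theorem rankOne_apply (x f v : H) : rankOne x f v = ⟪f, v⟫_ℂ • x := rfl

theorem norm_rankOne (x f : H) : ‖rankOne x f‖ = ‖x‖ * ‖f‖ :=
  InnerProductSpace.norm_rankOne x f

theorem rankOne_mul_self_eq_zero {x f : H} (h : ⟪f, x⟫_ℂ = 0) : rankOne x f * rankOne x f = 0 := by
  ext v
  simp [rankOne_apply, h]

/-- The vector `conj z • p + s • q`, where `p = ‖f‖ x` and `q = ‖x‖ f`. If `⟪f, x⟫ = k z` with
`k ∈ [0, 1]` and `s ≥ 0` is chosen so that `s (s + ‖x‖ ‖f‖) = (1 - k) ‖z‖²`, it is an approximate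
eigenvector of `rankOne x f` at `z` with relative error exactly `s`. -/
noncomputable def approxEigenvector (x f : H) (z : ℂ) (s : ℝ) : H :=
  conj z • (‖f‖ : ℂ) • x + (s : ℂ) • (‖x‖ : ℂ) • f

theorem smul_sub_rankOne_approxEigenvector {x f : H} {z : ℂ} {k s : ℝ} (hτ : ⟪f, x⟫_ℂ = k * z)
    (hs : s * (s + ‖x‖ * ‖f‖) = (1 - k) * ‖z‖ ^ 2) :
    z • approxEigenvector x f z s - rankOne x f (approxEigenvector x f z s) =
      (s : ℂ) • ((s : ℂ) • (‖f‖ : ℂ) • x + z • (‖x‖ : ℂ) • f) := by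
  have hs' : (s * (s + ‖x‖ * ‖f‖) : ℂ) = (1 - k) * (z * conj z) := by
    rw [Complex.mul_conj']
    exact_mod_cast hs
  simp only [approxEigenvector, rankOne_apply, inner_add_right, inner_smul_right, hτ,
    inner_self_eq_norm_sq_to_K, Complex.coe_algebraMap]
  match_scalars
  · linear_combination -‖f‖ * hs'
  · ring

theorem norm_smul_sub_rankOne_approxEigenvector {x f : H} {z : ℂ} {k s : ℝ}
    (hτ : ⟪f, x⟫_ℂ = k * z) (hs₀ : 0 ≤ s) (hs : s * (s + ‖x‖ * ‖f‖) = (1 - k) * ‖z‖ ^ 2) :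
    ‖z • approxEigenvector x f z s - rankOne x f (approxEigenvector x f z s)‖ =
      s * ‖approxEigenvector x f z s‖ := by
  have norm_eq : ‖(‖f‖ : ℂ) • x‖ = ‖(‖x‖ : ℂ) • f‖ := by
    simp only [norm_smul, Complex.norm_real, norm_norm, mul_comm]
  rw [smul_sub_rankOne_approxEigenvector hτ hs, norm_smul, Complex.norm_of_nonneg hs₀,
    norm_smul_add_smul_eq_of_norm_eq norm_eq, Complex.conj_ofReal, approxEigenvector]

theorem approxEigenvector_ne_zero {x f : H} (hx : x ≠ 0) (hf : f ≠ 0) {z : ℂ} (hz : z ≠ 0)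
    {k s : ℝ} (hk : 0 ≤ k) (hs : 0 ≤ s) (hτ : ⟪f, x⟫_ℂ = k * z) :
    approxEigenvector x f z s ≠ 0 := by
  intro h
  have inner_eq : ⟪x, approxEigenvector x f z s⟫_ℂ =
      conj z * (‖x‖ * (‖f‖ * ‖x‖ + s * k) : ℝ) := by
    simp only [approxEigenvector, inner_add_right, inner_smul_right, inner_self_eq_norm_sq_to_K,
      ← inner_conj_symm x f, hτ, map_mul, Complex.conj_ofReal, Complex.coe_algebraMap]
    push_cast
    ring
  have : 0 < ‖x‖ * (‖f‖ * ‖x‖ + s * k) := by positivity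
  rw [h, inner_zero_right, eq_comm, mul_eq_zero, Complex.ofReal_eq_zero] at inner_eq
  exact inner_eq.elim (star_ne_zero.mpr hz) this.ne'

variable [CompleteSpace H] {ε : ℝ}

theorem mem_pseudoSpectrum_iff (hε : 0 < ε) {A : H →L[ℂ] H} {z : ℂ} :
    z ∈ pseudoSpectrum ε A ↔
      ¬ IsUnit (z • (1 : H →L[ℂ] H) - A) ∨ ∃ v, ‖z • v - A v‖ < ε * ‖v‖ := by
  refine or_congr_right' fun hu => ?_
  rw [lt_norm_ringInverse_iff (not_not.mp hu) (inv_nonneg.mpr hε.le)]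
  simp only [inv_mul_lt_iff₀ hε]
  rfl

theorem mem_pseudoSpectrum_of_norm_lt (hε : 0 < ε) {A : H →L[ℂ] H} {z : ℂ} {v : H}
    (hv : ‖z • v - A v‖ < ε * ‖v‖) : z ∈ pseudoSpectrum ε A :=
  (mem_pseudoSpectrum_iff hε).mpr (.inr ⟨v, hv⟩)

theorem pseudoSpectrum_subset_ball_of_mul_self_eq_zero (hε : 0 < ε) {A : H →L[ℂ] H}
    (hA : A * A = 0) : pseudoSpectrum ε A ⊆ Metric.ball 0 √(ε ^ 2 + ‖A‖ * ε) := by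
  intro z hz
  rw [mem_ball_zero_iff, Real.lt_sqrt (norm_nonneg z)]
  by_contra! hz_large
  have hz_ne : z ≠ 0 := by
    rintro rfl
    have : 0 < ε ^ 2 + ‖A‖ * ε := by positivity
    simp only [norm_zero, zero_pow two_ne_zero] at hz_large
    linarith
  have hunit : IsUnit (z • (1 : H →L[ℂ] H) - A) := by
    have scalar_unit : IsUnit (z • (1 : H →L[ℂ] H)) := by
      simpa only [Algebra.algebraMap_eq_smul_one] using
        (IsUnit.mk0 z hz_ne).map (algebraMap ℂ (H →L[ℂ] H))
    have hnil : IsNilpotent (-A) := IsNilpotent.neg ⟨2, by rw [sq, hA]⟩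
    rw [sub_eq_add_neg]
    exact hnil.isUnit_add_left_of_commute scalar_unit ((Commute.one_right _).smul_right z)
  obtain hz | ⟨v, hv⟩ := (mem_pseudoSpectrum_iff hε).mp hz
  · exact hz hunit
  · exact hv.not_ge (mul_norm_le_norm_smul_sub_of_mul_self_eq_zero hA hε.le hz_large v)

theorem inner_mem_pseudoSpectrum_rankOne (hε : 0 < ε) {x : H} (hx : x ≠ 0) (f : H) :
    ⟪f, x⟫_ℂ ∈ pseudoSpectrum ε (rankOne x f) :=
  mem_pseudoSpectrum_of_norm_lt hε (v := x) <| by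
    rw [rankOne_apply, sub_self, norm_zero]
    positivity

theorem mem_pseudoSpectrum_rankOne_of_inner_eq_mul (hε : 0 < ε) {x f : H} (hx : x ≠ 0)
    (hf : f ≠ 0) {z : ℂ} (hz : z ≠ 0) {k : ℝ} (hk₀ : 0 ≤ k) (hk₁ : k ≤ 1)
    (hτ : ⟪f, x⟫_ℂ = k * z) (h : (1 - k) * ‖z‖ ^ 2 < ε ^ 2 + ‖x‖ * ‖f‖ * ε) :
    z ∈ pseudoSpectrum ε (rankOne x f) := by
  obtain ⟨s, hs₀, hs⟩ := exists_nonneg_mul_add_eq (‖x‖ * ‖f‖)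
    (mul_nonneg (sub_nonneg.mpr hk₁) (sq_nonneg ‖z‖))
  have hsε : s < ε := by
    by_contra! hεs
    have : ε * (ε + ‖x‖ * ‖f‖) ≤ s * (s + ‖x‖ * ‖f‖) := by gcongr
    linarith
  apply mem_pseudoSpectrum_of_norm_lt hε (v := approxEigenvector x f z s)
  rw [norm_smul_sub_rankOne_approxEigenvector hτ hs₀ hs]
  have := norm_pos_iff.mpr (approxEigenvector_ne_zero hx hf hz hk₀ hs₀ hτ)
  gcongr

theorem pseudoSpectrum_rankOne_of_inner_eq_zero (hε : 0 < ε) {x f : H} (hx : x ≠ 0) (hf : f ≠ 0)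
    (h : ⟪f, x⟫_ℂ = 0) :
    pseudoSpectrum ε (rankOne x f) = Metric.ball 0 √(ε ^ 2 + ‖x‖ * ‖f‖ * ε) := by
  refine Set.Subset.antisymm ?_ fun z hz => ?_
  · rw [← norm_rankOne]
    exact pseudoSpectrum_subset_ball_of_mul_self_eq_zero hε (rankOne_mul_self_eq_zero h)
  · rw [mem_ball_zero_iff, Real.lt_sqrt (norm_nonneg z)] at hz
    obtain rfl | hz_ne := eq_or_ne z 0
    · exact h ▸ inner_mem_pseudoSpectrum_rankOne hε hx f
    · exact mem_pseudoSpectrum_rankOne_of_inner_eq_mul (k := 0) hε hx hf hz_ne le_rfl zero_le_one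
        (by simpa using h) (by simpa using hz)

theorem exists_norm_eq_mem_pseudoSpectrum_rankOne (hε : 0 < ε) {x f : H} (hx : x ≠ 0)
    (hf : f ≠ 0) (h : ⟪f, x⟫_ℂ ≠ 0) (hR : ‖⟪f, x⟫_ℂ‖ ≤ √(ε ^ 2 + ‖x‖ * ‖f‖ * ε)) :
    ∃ z ∈ pseudoSpectrum ε (rankOne x f), ‖z‖ = √(ε ^ 2 + ‖x‖ * ‖f‖ * ε) := by
  set τ := ⟪f, x⟫_ℂ
  set R := √(ε ^ 2 + ‖x‖ * ‖f‖ * ε)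
  have hτ_pos : 0 < ‖τ‖ := norm_pos_iff.mpr h
  have hR_pos : 0 < R := hτ_pos.trans_le hR
  have hR_sq : R ^ 2 = ε ^ 2 + ‖x‖ * ‖f‖ * ε := Real.sq_sqrt (by positivity)
  have norm_z : ‖((R / ‖τ‖ : ℝ) : ℂ) * τ‖ = R := by
    rw [norm_mul, Complex.norm_of_nonneg (by positivity), div_mul_cancel₀ _ hτ_pos.ne']
  refine ⟨(R / ‖τ‖ : ℝ) * τ, ?_, norm_z⟩
  have z_ne : ((R / ‖τ‖ : ℝ) : ℂ) * τ ≠ 0 := norm_ne_zero_iff.mp (norm_z.trans_ne hR_pos.ne')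
  apply mem_pseudoSpectrum_rankOne_of_inner_eq_mul (k := ‖τ‖ / R) hε hx hf z_ne (by positivity)
    (div_le_one_of_le₀ hR hR_pos.le)
  · rw [← mul_assoc, ← Complex.ofReal_mul, div_mul_div_cancel₀ hR_pos.ne', div_self hτ_pos.ne',
      Complex.ofReal_one, one_mul]
  · rw [norm_z, ← hR_sq]
    exact mul_lt_of_lt_one_left (by positivity) (sub_lt_self 1 (by positivity))

end Hilbert

theorem stmt_9 {H : Type*} [NormedAddCommGroup H] [InnerProductSpace ℂ H]
    [CompleteSpace H] (ε : ℝ) (hε : 0 < ε) (x f : H) (hx : x ≠ 0) (hf : f ≠ 0) :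
    ⟪f, x⟫_ℂ = 0 ↔
      pseudoSpectrum ε (rankOne x f) =
        Metric.ball (0 : ℂ) (Real.sqrt (ε ^ 2 + ‖x‖ * ‖f‖ * ε)) := by
  refine ⟨pseudoSpectrum_rankOne_of_inner_eq_zero hε hx hf, fun heq => ?_⟩
  by_contra hne
  have hτ := inner_mem_pseudoSpectrum_rankOne hε hx f
  rw [heq, mem_ball_zero_iff] at hτ
  obtain ⟨z, hz, norm_z⟩ := exists_norm_eq_mem_pseudoSpectrum_rankOne hε hx hf hne hτ.le
  rw [heq, mem_ball_zero_iff] at hz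
  exact hz.ne norm_z
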